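/- For 0 < q < 1, every zero of the entire function f(x) = Σ_{n=0}^∞ x^n q^{n(n-1)/2}/n! is real, negative, and simple. -/

import Mathlib

/-!
Write `f(z) = ∑ zⁿ q^{n(n-1)/2} / n!`, so that `f'(z) = f(qz)`, and consider its Jensen polynomials
`Pₙ(z) = ∑ₖ (n choose k) q^{k(k-1)/2} zᵏ`, for which `Pₙ(z / n) → f(z)` and
`Pₙ₊₁(z) = Pₙ(z) + z Pₙ(qz)`.

*Zeros are real and negative.* By induction, the zeros `-a₁, …, -aₙ` of `Pₙ` satisfy `0 < a₁` and
`aᵢ < q aᵢ₊₁`: the recursion gives `Pₙ₊₁` opposite signs at `-aᵢ / q` and at `-aᵢ₊₁` (with `a₀ = 0`,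
and `aₙ₊₁` very large), and the new zeros found in between are again separated. Hence
`Pₙ(z / n) = ∏ᵢ (1 + tᵢ z)` with `tᵢ > 0` and, comparing linear coefficients, `∑ tᵢ = 1`. If `z` is
not in `(-∞, 0]`, then `|1 + t z| ≥ exp (-C t)` for all `t ≥ 0`, so `|Pₙ(z / n)| ≥ exp (-C)` for all
`n ≥ 1`, and `f(z) ≠ 0` in the limit.

*Zeros are simple.* If `f(x) = f'(x) = 0` then `u = x` and `v = qx` are zeros with `u < v ≤ qu < 0`.
Rolle's theorem on `[u, v]` gives a zero `w` with `qu < w < qv`, and on `[v, w]` a zero `w'` with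
`qv < w' < qw`. So `(w, w')` is again such a pair, with `|w| < q|u|`. Iterating, zeros accumulate
at `0`, contradicting `f(0) = 1`.
-/

open Filter Topology Polynomial

section DeformedExp

variable {𝕜 : Type*} [RCLike 𝕜] {q : 𝕜}

/-- The `n`-th term of the power series of the deformed exponential function. -/
noncomputable def deformedExpTerm (q z : 𝕜) (n : ℕ) : 𝕜 :=
  z ^ n * q ^ (n * (n - 1) / 2) / n.factorial

/-- The deformed exponential function `∑ zⁿ q^{n(n-1)/2} / n!`. It is meant for `‖q‖ ≤ 1`, where the
series converges for every `z`. -/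
noncomputable def deformedExp (q z : 𝕜) : 𝕜 :=
  ∑' n, deformedExpTerm q z n

lemma norm_deformedExpTerm_le (hq : ‖q‖ ≤ 1) (z : 𝕜) (n : ℕ) :
    ‖deformedExpTerm q z n‖ ≤ ‖z‖ ^ n / n.factorial := by
  rw [deformedExpTerm, norm_div, norm_mul, norm_pow, norm_pow, RCLike.norm_natCast]
  gcongr
  exact mul_le_of_le_one_right (by positivity) (pow_le_one₀ (norm_nonneg q) hq)

lemma summable_deformedExpTerm (hq : ‖q‖ ≤ 1) (z : 𝕜) : Summable (deformedExpTerm q z) :=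
  .of_norm_bounded (Real.summable_pow_div_factorial ‖z‖) (norm_deformedExpTerm_le hq z)

@[simp]
lemma deformedExp_zero_right (q : 𝕜) : deformedExp q 0 = 1 := by
  have hterm : ∀ n ≠ 0, deformedExpTerm q 0 n = 0 := fun n hn => by simp [deformedExpTerm, hn]
  rw [deformedExp, tsum_eq_single 0 hterm]
  simp [deformedExpTerm]

lemma deformedExp_ofReal (q x : ℝ) : deformedExp (q : ℂ) x = (deformedExp q x : ℝ) := by
  rw [deformedExp, deformedExp, Complex.ofReal_tsum]
  simp [deformedExpTerm]

lemma hasDerivAt_deformedExpTerm_succ (q z : 𝕜) (n : ℕ) :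
    HasDerivAt (fun w => deformedExpTerm q w (n + 1)) (deformedExpTerm q (q * z) n) z := by
  refine (((hasDerivAt_pow (n + 1) z).mul_const _).div_const _).congr_deriv ?_
  have : (n.factorial : 𝕜) ≠ 0 := by exact_mod_cast n.factorial_ne_zero
  have : (n + 1 : 𝕜) ≠ 0 := by exact_mod_cast n.succ_ne_zero
  rw [deformedExpTerm, Nat.triangle_succ, Nat.factorial_succ, Nat.add_sub_cancel]
  push_cast
  field_simp
  ring

theorem hasDerivAt_deformedExp (hq : ‖q‖ ≤ 1) (z : 𝕜) :
    HasDerivAt (deformedExp q) (deformedExp q (q * z)) z := by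
  have hsplit : deformedExp q =
      fun w => deformedExpTerm q w 0 + ∑' n, deformedExpTerm q w (n + 1) :=
    funext fun w => (summable_deformedExpTerm hq w).tsum_eq_zero_add
  have hz : z ∈ Metric.ball (0 : 𝕜) (‖z‖ + 1) := by simp
  have hbound : ∀ n, ∀ w ∈ Metric.ball (0 : 𝕜) (‖z‖ + 1),
      ‖deformedExpTerm q (q * w) n‖ ≤ (‖z‖ + 1) ^ n / n.factorial := fun n w hw => by
    refine (norm_deformedExpTerm_le hq _ n).trans ?_
    gcongr
    rw [norm_mul]
    exact (mul_le_of_le_one_left (norm_nonneg w) hq).trans (mem_ball_zero_iff.1 hw).le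
  have htail : HasDerivAt (fun w => ∑' n, deformedExpTerm q w (n + 1)) (deformedExp q (q * z)) z :=
    hasDerivAt_tsum_of_isPreconnected (Real.summable_pow_div_factorial (‖z‖ + 1))
      Metric.isOpen_ball Metric.isPreconnected_ball
      (fun n w _ => hasDerivAt_deformedExpTerm_succ q w n) hbound hz
      ((summable_nat_add_iff 1).2 (summable_deformedExpTerm hq z)) hz
  simpa [hsplit, deformedExpTerm] using htail.const_add 1

end DeformedExp

section JensenPoly

/-- The `n`-th Jensen polynomial `∑ₖ (n choose k) q^{k(k-1)/2} Xᵏ` of the deformed exponential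
function. -/
noncomputable def jensenPoly {R : Type*} [Semiring R] (q : R) (n : ℕ) : R[X] :=
  ∑ k ∈ Finset.range (n + 1), monomial k (n.choose k * q ^ (k * (k - 1) / 2))

lemma coeff_jensenPoly {R : Type*} [Semiring R] (q : R) (n k : ℕ) :
    (jensenPoly q n).coeff k = n.choose k * q ^ (k * (k - 1) / 2) := by
  simp only [jensenPoly, finsetSum_coeff, coeff_monomial, Finset.sum_ite_eq', Finset.mem_range]
  split_ifs with hk
  · rfl
  · rw [Nat.choose_eq_zero_of_lt (by omega), Nat.cast_zero, zero_mul]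

lemma map_jensenPoly {R S : Type*} [Semiring R] [Semiring S] (φ : R →+* S) (q : R) (n : ℕ) :
    (jensenPoly q n).map φ = jensenPoly (φ q) n := by
  ext k
  simp [coeff_jensenPoly]

lemma jensenPoly_zero {R : Type*} [Semiring R] (q : R) : jensenPoly q 0 = 1 := by
  simp [jensenPoly]

lemma jensenPoly_succ {R : Type*} [CommSemiring R] (q : R) (n : ℕ) :
    jensenPoly q (n + 1) = jensenPoly q n + X * (jensenPoly q n).comp (C q * X) := by
  ext (_ | k)
  · simp [coeff_jensenPoly]
  · simp only [coeff_add, coeff_X_mul, comp_C_mul_X_coeff, coeff_jensenPoly,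
      Nat.choose_succ_succ, Nat.triangle_succ]
    push_cast
    ring

lemma eval_jensenPoly_succ {R : Type*} [CommSemiring R] (q : R) (n : ℕ) (x : R) :
    (jensenPoly q (n + 1)).eval x =
      (jensenPoly q n).eval x + x * (jensenPoly q n).eval (q * x) := by
  simp [jensenPoly_succ, eval_comp]

lemma eval_zero_jensenPoly {R : Type*} [Semiring R] (q : R) (n : ℕ) :
    (jensenPoly q n).eval 0 = 1 := by
  simp [← coeff_zero_eq_eval_zero, coeff_jensenPoly]

lemma natDegree_jensenPoly {R : Type*} [Semiring R] [NoZeroDivisors R] [Nontrivial R] {q : R}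
    (hq : q ≠ 0) (n : ℕ) : (jensenPoly q n).natDegree = n := by
  refine natDegree_eq_of_le_of_coeff_ne_zero ?_ ?_
  · rw [natDegree_le_iff_coeff_eq_zero]
    intro k hk
    simp [coeff_jensenPoly, Nat.choose_eq_zero_of_lt hk]
  · simp [coeff_jensenPoly, hq]

lemma leadingCoeff_jensenPoly {R : Type*} [Semiring R] [NoZeroDivisors R] [Nontrivial R] {q : R}
    (hq : q ≠ 0) (n : ℕ) : (jensenPoly q n).leadingCoeff = q ^ (n * (n - 1) / 2) := by
  simp [leadingCoeff, natDegree_jensenPoly hq, coeff_jensenPoly]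

lemma tendsto_choose_mul_div_pow {𝕜 : Type*} [RCLike 𝕜] (z : 𝕜) (k : ℕ) :
    Tendsto (fun n : ℕ => n.choose k * (z / n) ^ k) atTop (𝓝 (z ^ k / k.factorial)) := by
  have hone : Tendsto (fun n : ℕ => (n : ℝ) * (n : ℝ)⁻¹) atTop (𝓝 1) :=
    tendsto_const_nhds.congr' <| (eventually_ne_atTop 0).mono fun n hn => by field_simp
  have hchoose := ((RCLike.continuous_ofReal (K := 𝕜)).tendsto _).comp
    (ProbabilityTheory.tendsto_choose_mul_pow_atTop k hone)
  convert hchoose.const_mul (z ^ k) using 1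
  · ext n
    simp only [div_eq_mul_inv, mul_pow, inv_pow, Function.comp_apply, map_mul, map_natCast,
      map_inv₀, map_pow]
    ring
  · simp [div_eq_mul_inv]

lemma choose_mul_div_pow_le {x : ℝ} (hx : 0 ≤ x) (n k : ℕ) :
    n.choose k * (x / n) ^ k ≤ x ^ k / k.factorial :=
  calc n.choose k * (x / n) ^ k ≤ n ^ k / k.factorial * (x / n) ^ k := by
        gcongr
        exact Nat.choose_le_pow_div k n
    _ = (n * (x / n)) ^ k / k.factorial := by ring
    _ ≤ x ^ k / k.factorial := by
        gcongr
        rw [mul_div_left_comm]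
        exact mul_le_of_le_one_right hx (div_self_le_one _)

theorem tendsto_eval_jensenPoly {𝕜 : Type*} [RCLike 𝕜] {q : 𝕜} (hq : ‖q‖ ≤ 1) (z : 𝕜) :
    Tendsto (fun n : ℕ => (jensenPoly q n).eval (z / n)) atTop (𝓝 (deformedExp q z)) := by
  have heval : ∀ n : ℕ, (jensenPoly q n).eval (z / n) =
      ∑' k, n.choose k * (z / n) ^ k * q ^ (k * (k - 1) / 2) := fun n => by
    rw [jensenPoly, eval_finsetSum, tsum_eq_sum (s := Finset.range (n + 1)) fun k hk => by
      simp [Nat.choose_eq_zero_of_lt (by simpa using hk)]]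
    exact Finset.sum_congr rfl fun k _ => by rw [eval_monomial]; ring
  simp_rw [heval]
  refine tendsto_tsum_of_dominated_convergence (Real.summable_pow_div_factorial ‖z‖)
    (fun k => ?_) (.of_forall fun n k => ?_)
  · rw [deformedExpTerm, mul_div_right_comm]
    exact (tendsto_choose_mul_div_pow z k).mul_const _
  · rw [norm_mul, norm_mul, norm_pow, norm_pow, norm_div, RCLike.norm_natCast, RCLike.norm_natCast]
    exact (mul_le_of_le_one_right (by positivity) (pow_le_one₀ (norm_nonneg q) hq)).trans
      (choose_mul_div_pow_le (norm_nonneg z) n k)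

end JensenPoly

section RealRoots

theorem eq_C_mul_prod_of_injOn_roots {K ι : Type*} [Field K] {p : K[X]} {s : Finset ι} {r : ι → K}
    (hdeg : p.natDegree ≤ s.card) (hinj : Set.InjOn r s) (hne : ∀ i ∈ s, r i ≠ 0)
    (hroot : ∀ i ∈ s, p.eval (r i) = 0) :
    p = C (p.eval 0) * ∏ i ∈ s, (1 - C (r i)⁻¹ * X) := by
  classical
  have hcard : (insert 0 (s.image r)).card = s.card + 1 := by
    rw [Finset.card_insert_of_notMem (by simpa using hne), Finset.card_image_of_injOn hinj]
  have hdeg' : (C (p.eval 0) * ∏ i ∈ s, (1 - C (r i)⁻¹ * X)).natDegree ≤ s.card := by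
    refine (natDegree_C_mul_le _ _).trans <| (natDegree_prod_le _ _).trans ?_
    rw [← mul_one s.card]
    exact Finset.sum_le_card_nsmul s _ 1 fun i _ => by compute_degree
  refine eq_of_degrees_lt_of_eval_finset_eq (insert 0 (s.image r)) ?_ ?_ ?_
  · exact (degree_le_of_natDegree_le hdeg).trans_lt
      (by rw [hcard]; exact_mod_cast Nat.lt_succ_self _)
  · exact (degree_le_of_natDegree_le hdeg').trans_lt
      (by rw [hcard]; exact_mod_cast Nat.lt_succ_self _)
  · simp only [Finset.forall_mem_insert, Finset.forall_mem_image]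
    refine ⟨by simp [eval_prod], fun i hi => ?_⟩
    rw [hroot i hi, eval_mul, eval_prod, Finset.prod_eq_zero hi (by simp [hne i hi]), mul_zero]

lemma coeff_one_prod_one_add_C_mul_X {R ι : Type*} [CommSemiring R] (s : Finset ι) (c : ι → R) :
    (∏ i ∈ s, (1 + C (c i) * X)).coeff 1 = ∑ i ∈ s, c i := by
  classical
  induction s using Finset.induction_on with
  | empty => simp [coeff_one]
  | insert i s hi ih =>
    have hcoeff : (∏ i ∈ s, (1 + C (c i) * X)).coeff 0 = 1 := by simp [coeff_zero_prod]
    rw [Finset.prod_insert hi, Finset.sum_insert hi, add_mul, one_mul, coeff_add, ih, mul_assoc,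
      coeff_C_mul, coeff_X_mul, hcoeff, mul_one, add_comm]

lemma tendsto_neg_one_pow_mul_eval_neg_atTop {p : ℝ[X]} (hdeg : 0 < p.natDegree)
    (hlead : 0 < p.leadingCoeff) :
    Tendsto (fun x => (-1) ^ p.natDegree * p.eval (-x)) atTop atTop := by
  have hnat : (C ((-1) ^ p.natDegree) * p.comp (-X)).natDegree = p.natDegree := by
    rw [natDegree_C_mul (by simp), natDegree_comp, natDegree_neg, natDegree_X, mul_one]
  have hcoeff : (C ((-1) ^ p.natDegree) * p.comp (-X)).leadingCoeff = p.leadingCoeff := by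
    rw [leadingCoeff_mul, leadingCoeff_C, leadingCoeff_comp (by simp), leadingCoeff_neg,
      leadingCoeff_X, mul_left_comm, ← mul_pow]
    simp
  refine (tendsto_atTop_of_leadingCoeff_nonneg _ (natDegree_pos_iff_degree_pos.1 (hnat ▸ hdeg))
    (hcoeff ▸ hlead.le)).congr fun x => ?_
  rw [eval_mul, eval_C, eval_comp, eval_neg, eval_X]

lemma exists_mem_Ioo_eq_zero_of_sign_change {f : ℝ → ℝ} {s l r : ℝ} (hlr : l ≤ r)
    (hf : ContinuousOn f (Set.Icc l r)) (hl : 0 < s * f l) (hr : s * f r < 0) :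
    ∃ b ∈ Set.Ioo l r, f b = 0 := by
  obtain ⟨b, hb, hb0⟩ := intermediate_value_Ioo' hlr (hf.const_mul s) ⟨hr, hl⟩
  exact ⟨b, hb, (mul_eq_zero.1 hb0).resolve_left (left_ne_zero_of_mul hl.ne')⟩

lemma neg_one_pow_mul_prod_one_sub_div_pos {K : Type*} [Field K] [LinearOrder K]
    [IsStrictOrderedRing K] {r : ℕ → K} {x : K} {i n : ℕ} (hi : i ≤ n)
    (hr : ∀ j, 0 < r j) (hlt : ∀ j < i, r j < x) (hgt : ∀ j, i ≤ j → x < r j) :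
    0 < (-1) ^ i * ∏ j ∈ Finset.range n, (1 - x / r j) := by
  have hsign : (-1) ^ i * ∏ j ∈ Finset.range i, (1 - x / r j) =
      ∏ j ∈ Finset.range i, (x / r j - 1) := by
    simpa using (Finset.prod_neg (s := Finset.range i) fun j => 1 - x / r j).symm
  rw [← Finset.prod_range_mul_prod_Ico _ hi, ← mul_assoc, hsign]
  refine mul_pos (Finset.prod_pos fun j hj => ?_) (Finset.prod_pos fun j hj => ?_)
  · rw [sub_pos, one_lt_div (hr j)]
    exact hlt j (Finset.mem_range.1 hj)
  · rw [sub_pos, div_lt_one (hr j)]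
    exact hgt j (Finset.mem_Ico.1 hj).1

/-- A sequence `0 = a₀, a₁, a₂, …` whose successive ratios `aᵢ₊₁ / aᵢ` exceed `1 / q`. The numbers
`-a₁, …, -aₙ` will be the zeros of a polynomial of degree `n`; the initial zero and the later terms
only serve to bracket the zeros of the next polynomial. -/
structure QSeparated (q : ℝ) (a : ℕ → ℝ) : Prop where
  zero : a 0 = 0
  lt_mul_succ : ∀ i, a i < q * a (i + 1)

variable {q : ℝ} {a : ℕ → ℝ} {n : ℕ}

lemma qSeparated_inv_pow_sub_one (hq0 : 0 < q) (hq1 : q < 1) :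
    QSeparated q fun i => (q ^ i)⁻¹ - 1 where
  zero := by simp
  lt_mul_succ i := by
    have : q * ((q ^ (i + 1))⁻¹ - 1) = (q ^ i)⁻¹ - q := by
      rw [pow_succ]
      field_simp
    linarith

namespace QSeparated

lemma nonneg (ha : QSeparated q a) (hq0 : 0 < q) : ∀ i, 0 ≤ a i
  | 0 => ha.zero.ge
  | i + 1 => (pos_of_mul_pos_right ((ha.nonneg hq0 i).trans_lt (ha.lt_mul_succ i)) hq0.le).le

lemma succ_pos (ha : QSeparated q a) (hq0 : 0 < q) (i : ℕ) : 0 < a (i + 1) :=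
  pos_of_mul_pos_right ((ha.nonneg hq0 i).trans_lt (ha.lt_mul_succ i)) hq0.le

lemma strictMono (ha : QSeparated q a) (hq0 : 0 < q) (hq1 : q < 1) : StrictMono a :=
  strictMono_nat_of_lt_succ fun i =>
    (ha.lt_mul_succ i).trans (mul_lt_of_lt_one_left (ha.succ_pos hq0 i) hq1)

lemma div_lt_succ (ha : QSeparated q a) (hq0 : 0 < q) (i : ℕ) : a i / q < a (i + 1) :=
  (div_lt_iff₀' hq0).2 (ha.lt_mul_succ i)

lemma exists_eqOn_Iic_of_le (ha : QSeparated q a) (hq0 : 0 < q) {x : ℝ} (hx : a (n + 1) ≤ x) :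
    ∃ a', QSeparated q a' ∧ Set.EqOn a' a (Set.Iic n) ∧ a' (n + 1) = x := by
  have hpos := ha.succ_pos hq0 n
  set t := x / a (n + 1)
  have ht : 1 ≤ t := (one_le_div hpos).2 hx
  refine ⟨fun i => if i ≤ n then a i else t * a i, ⟨by simp [ha.zero], fun i => ?_⟩,
    fun i hi => if_pos hi, by simp [t, hpos.ne']⟩
  have hi := ha.lt_mul_succ i
  have hle : a i ≤ t * a i := le_mul_of_one_le_left (ha.nonneg hq0 i) ht
  have hmul : t * a i < q * (t * a (i + 1)) := by
    rw [mul_left_comm]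
    gcongr
  split_ifs <;> first | omega | linarith

lemma cons_of_mem_Ioo (ha : QSeparated q a) (hq0 : 0 < q) {c : ℕ → ℝ}
    (hc : ∀ i, c i ∈ Set.Ioo (a i / q) (a (i + 1))) :
    QSeparated q fun i => Nat.casesOn i 0 c where
  zero := rfl
  lt_mul_succ
    | 0 => mul_pos hq0 ((div_nonneg (ha.nonneg hq0 0) hq0.le).trans_lt (hc 0).1)
    | i + 1 => (hc i).2.trans ((div_lt_iff₀' hq0).1 (hc (i + 1)).1)

end QSeparated

/-- The polynomial of degree at most `n` with constant coefficient `1` and zeros `-a₁, …, -aₙ`. -/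
noncomputable def rootPoly (a : ℕ → ℝ) (n : ℕ) : ℝ[X] :=
  ∏ i ∈ Finset.range n, (1 + C (a (i + 1))⁻¹ * X)

lemma eval_neg_rootPoly (a : ℕ → ℝ) (n : ℕ) (x : ℝ) :
    (rootPoly a n).eval (-x) = ∏ i ∈ Finset.range n, (1 - x / a (i + 1)) := by
  rw [rootPoly, eval_prod]
  exact Finset.prod_congr rfl fun i _ => by
    simp only [eval_add, eval_one, eval_mul, eval_C, eval_X]
    ring

lemma QSeparated.eval_neg_rootPoly_eq_zero (ha : QSeparated q a) (hq0 : 0 < q) {i : ℕ}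
    (hi : i < n) : (rootPoly a n).eval (-a (i + 1)) = 0 := by
  rw [eval_neg_rootPoly]
  exact Finset.prod_eq_zero (Finset.mem_range.2 hi) (by simp [(ha.succ_pos hq0 i).ne'])

lemma QSeparated.eval_neg_div_jensenPoly_succ_pos (ha : QSeparated q a) (hq0 : 0 < q) (hq1 : q < 1)
    (hP : jensenPoly q n = rootPoly a n) {i : ℕ} (hi : i ≤ n) :
    0 < (-1) ^ i * (jensenPoly q (n + 1)).eval (-(a i / q)) := by
  have hmono := ha.strictMono hq0 hq1
  have hvanish : a i * (rootPoly a n).eval (-a i) = 0 := by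
    cases i with
    | zero => simp [ha.zero]
    | succ i => rw [ha.eval_neg_rootPoly_eq_zero hq0 hi, mul_zero]
  have heval : (jensenPoly q (n + 1)).eval (-(a i / q)) =
      ∏ j ∈ Finset.range n, (1 - a i / q / a (j + 1)) := by
    have hcancel : q * -(a i / q) = -a i := by field_simp
    rw [eval_jensenPoly_succ, hP, hcancel, eval_neg_rootPoly, neg_mul, div_mul_eq_mul_div, hvanish]
    simp
  rw [heval]
  refine neg_one_pow_mul_prod_one_sub_div_pos hi (ha.succ_pos hq0) (fun j hj => ?_) fun j hj => ?_
  · have hle : a (j + 1) ≤ a i := hmono.monotone hj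
    exact hle.trans_lt ((lt_div_iff₀ hq0).2
      (mul_lt_of_lt_one_right ((ha.succ_pos hq0 j).trans_le hle) hq1))
  · exact (ha.div_lt_succ hq0 i).trans_le (hmono.monotone (by omega))

lemma QSeparated.eval_neg_jensenPoly_succ_neg (ha : QSeparated q a) (hq0 : 0 < q) (hq1 : q < 1)
    (hP : jensenPoly q n = rootPoly a n) {i : ℕ} (hi : i < n) :
    (-1) ^ i * (jensenPoly q (n + 1)).eval (-a (i + 1)) < 0 := by
  have hmono := ha.strictMono hq0 hq1
  have hpos := ha.succ_pos hq0 i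
  have hsign : 0 < (-1) ^ i * ∏ j ∈ Finset.range n, (1 - q * a (i + 1) / a (j + 1)) :=
    neg_one_pow_mul_prod_one_sub_div_pos hi.le (ha.succ_pos hq0)
      (fun j hj => (hmono.monotone hj).trans_lt (ha.lt_mul_succ i))
      (fun j hj => (mul_lt_of_lt_one_left hpos hq1).trans_le (hmono.monotone (by omega)))
  rw [eval_jensenPoly_succ, hP, ha.eval_neg_rootPoly_eq_zero hq0 hi, mul_neg q, eval_neg_rootPoly]
  linarith [mul_pos hpos hsign]

lemma eventually_eval_neg_jensenPoly_succ_neg (hq0 : 0 < q) (n : ℕ) :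
    ∀ᶠ x in atTop, (-1) ^ n * (jensenPoly q (n + 1)).eval (-x) < 0 := by
  have hdeg := natDegree_jensenPoly hq0.ne' (n + 1)
  have hlead : 0 < (jensenPoly q (n + 1)).leadingCoeff := by
    rw [leadingCoeff_jensenPoly hq0.ne']
    positivity
  filter_upwards [(tendsto_neg_one_pow_mul_eval_neg_atTop (by omega) hlead).eventually_gt_atTop 0]
    with x hx
  rw [hdeg, pow_succ] at hx
  linarith

lemma QSeparated.jensenPoly_succ_eq_rootPoly {b : ℕ → ℝ} (hb : QSeparated q b) (hq0 : 0 < q)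
    (hq1 : q < 1) (hroot : ∀ i ≤ n, (jensenPoly q (n + 1)).eval (-b (i + 1)) = 0) :
    jensenPoly q (n + 1) = rootPoly b (n + 1) := by
  rw [eq_C_mul_prod_of_injOn_roots (p := jensenPoly q (n + 1)) (s := Finset.range (n + 1))
    (r := fun i => -b (i + 1)), eval_zero_jensenPoly]
  · simp [rootPoly, inv_neg]
  · rw [natDegree_jensenPoly hq0.ne', Finset.card_range]
  · exact fun i _ j _ hij =>
      Nat.succ_injective ((hb.strictMono hq0 hq1).injective (neg_injective hij))
  · exact fun i _ => neg_ne_zero.2 (hb.succ_pos hq0 i).ne'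
  · exact fun i hi => hroot i (Finset.mem_range_succ_iff.1 hi)

lemma QSeparated.exists_jensenPoly_succ_eq_rootPoly (ha : QSeparated q a) (hq0 : 0 < q)
    (hq1 : q < 1) (hP : jensenPoly q n = rootPoly a n) :
    ∃ b, QSeparated q b ∧ jensenPoly q (n + 1) = rootPoly b (n + 1) := by
  obtain ⟨x, hx, hax⟩ := ((eventually_eval_neg_jensenPoly_succ_neg hq0 n).and
    (eventually_ge_atTop (a (n + 1)))).exists
  obtain ⟨a', ha', heq, rfl⟩ := ha.exists_eqOn_Iic_of_le hq0 hax
  have hP' : jensenPoly q n = rootPoly a' n := hP.trans <|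
    Finset.prod_congr rfl fun i hi => by rw [heq (Nat.succ_le_iff.2 (Finset.mem_range.1 hi))]
  have hneg : ∀ i ≤ n, (-1) ^ i * (jensenPoly q (n + 1)).eval (-a' (i + 1)) < 0 := fun i hi =>
    hi.eq_or_lt.elim (fun h => h ▸ hx) (ha'.eval_neg_jensenPoly_succ_neg hq0 hq1 hP')
  have hroot : ∀ i, ∃ c ∈ Set.Ioo (a' i / q) (a' (i + 1)),
      i ≤ n → (jensenPoly q (n + 1)).eval (-c) = 0 := fun i => by
    have hlt := ha'.div_lt_succ hq0 i
    by_cases hi : i ≤ n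
    · obtain ⟨c, hc, hc0⟩ := exists_mem_Ioo_eq_zero_of_sign_change
        (f := fun x => (jensenPoly q (n + 1)).eval (-x)) hlt.le (by fun_prop)
        (ha'.eval_neg_div_jensenPoly_succ_pos hq0 hq1 hP' hi) (hneg i hi)
      exact ⟨c, hc, fun _ => hc0⟩
    · obtain ⟨c, hc⟩ := exists_between hlt
      exact ⟨c, hc, fun h => absurd h hi⟩
  choose c hc hc0 using hroot
  have hb := ha'.cons_of_mem_Ioo hq0 hc
  exact ⟨_, hb, hb.jensenPoly_succ_eq_rootPoly hq0 hq1 hc0⟩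

theorem exists_jensenPoly_eq_rootPoly (hq0 : 0 < q) (hq1 : q < 1) (n : ℕ) :
    ∃ a, QSeparated q a ∧ jensenPoly q n = rootPoly a n := by
  induction n with
  | zero => exact ⟨_, qSeparated_inv_pow_sub_one hq0 hq1, by simp [jensenPoly_zero, rootPoly]⟩
  | succ n ih =>
    obtain ⟨a, ha, hP⟩ := ih
    exact ha.exists_jensenPoly_succ_eq_rootPoly hq0 hq1 hP

end RealRoots

section Nonvanishing

lemma exists_pos_le_norm_one_add_mul {z : ℂ} (hz : z ∈ Complex.slitPlane) :
    ∃ δ > 0, ∀ t : ℝ, 0 ≤ t → δ ≤ ‖1 + z * t‖ := by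
  rcases hz with hre | him
  · refine ⟨1, one_pos, fun t ht => ?_⟩
    have h := Complex.re_le_norm (1 + z * t)
    simp only [Complex.add_re, Complex.one_re, Complex.re_mul_ofReal] at h
    linarith [mul_nonneg hre.le ht]
  · have hz0 : 0 < ‖z‖ := norm_pos_iff.2 fun h => him (by simp [h])
    refine ⟨|z.im| / ‖z‖, div_pos (abs_pos.2 him) hz0, fun t _ => ?_⟩
    have him_eq : (starRingEnd ℂ z * (1 + z * t)).im = -z.im := by
      simp only [Complex.mul_im, Complex.conj_re, Complex.conj_im, Complex.add_re, Complex.add_im,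
        Complex.one_re, Complex.one_im, Complex.mul_re, Complex.ofReal_re, Complex.ofReal_im]
      ring
    calc |z.im| / ‖z‖ = |(starRingEnd ℂ z * (1 + z * t)).im| / ‖z‖ := by rw [him_eq, abs_neg]
      _ ≤ ‖starRingEnd ℂ z * (1 + z * t)‖ / ‖z‖ := by gcongr; exact Complex.abs_im_le_norm _
      _ = ‖1 + z * t‖ := by rw [norm_mul, RCLike.norm_conj, mul_div_cancel_left₀ _ hz0.ne']

lemma exists_exp_neg_mul_le_norm_one_add_mul {z : ℂ} (hz : z ∈ Complex.slitPlane) :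
    ∃ c, ∀ t : ℝ, 0 ≤ t → Real.exp (-c * t) ≤ ‖1 + z * t‖ := by
  obtain ⟨δ, hδ, hle⟩ := exists_pos_le_norm_one_add_mul hz
  refine ⟨‖z‖ / δ, fun t ht => ?_⟩
  have hpos : 0 < ‖1 + z * t‖ := hδ.trans_le (hle t ht)
  have htri : 1 ≤ ‖1 + z * t‖ + ‖z‖ * t := by
    simpa [abs_of_nonneg ht] using norm_sub_le (1 + z * t) (z * t)
  have hinv : ‖1 + z * t‖⁻¹ ≤ Real.exp (‖z‖ / δ * t) :=
    calc ‖1 + z * t‖⁻¹ ≤ (‖1 + z * t‖ + ‖z‖ * t) / ‖1 + z * t‖ := by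
          rw [inv_eq_one_div]
          gcongr
      _ = ‖z‖ * t / ‖1 + z * t‖ + 1 := by rw [add_div, div_self hpos.ne', add_comm]
      _ ≤ ‖z‖ * t / δ + 1 := by
          gcongr
          exact hle t ht
      _ ≤ Real.exp (‖z‖ / δ * t) := by
          rw [mul_div_right_comm]
          exact Real.add_one_le_exp _
  rw [neg_mul, Real.exp_neg]
  exact inv_le_of_inv_le₀ hpos hinv

lemma exists_exp_neg_mul_sum_le_norm_prod {ι : Type*} {z : ℂ} (hz : z ∈ Complex.slitPlane) :
    ∃ c, ∀ (s : Finset ι) (t : ι → ℝ), (∀ i ∈ s, 0 ≤ t i) →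
      Real.exp (-c * ∑ i ∈ s, t i) ≤ ‖∏ i ∈ s, (1 + z * t i)‖ := by
  obtain ⟨c, hc⟩ := exists_exp_neg_mul_le_norm_one_add_mul hz
  refine ⟨c, fun s t ht => ?_⟩
  rw [Finset.mul_sum, Real.exp_sum, norm_prod]
  exact Finset.prod_le_prod (fun _ _ => (Real.exp_pos _).le) fun i hi => hc (t i) (ht i hi)

lemma exists_eval_jensenPoly_div_eq_prod {q : ℝ} (hq0 : 0 < q) (hq1 : q < 1) {n : ℕ} (hn : n ≠ 0) :
    ∃ t : ℕ → ℝ, (∀ i, 0 ≤ t i) ∧ ∑ i ∈ Finset.range n, t i = 1 ∧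
      ∀ z : ℂ, (jensenPoly (q : ℂ) n).eval (z / n) = ∏ i ∈ Finset.range n, (1 + z * t i) := by
  obtain ⟨a, ha, hP⟩ := exists_jensenPoly_eq_rootPoly hq0 hq1 n
  have hsum : ∑ i ∈ Finset.range n, (a (i + 1))⁻¹ = n := by
    rw [← coeff_one_prod_one_add_C_mul_X, ← rootPoly, ← hP]
    simp [coeff_jensenPoly]
  refine ⟨fun i => (a (i + 1))⁻¹ / n, fun i => ?_, ?_, fun z => ?_⟩
  · have := ha.succ_pos hq0 i
    positivity
  · rw [← Finset.sum_div, hsum, div_self (by exact_mod_cast hn)]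
  · have hmap : jensenPoly (q : ℂ) n = (rootPoly a n).map Complex.ofRealHom := by
      rw [← hP, map_jensenPoly, Complex.ofRealHom_eq_coe]
    rw [hmap, rootPoly, Polynomial.map_prod, eval_prod]
    refine Finset.prod_congr rfl fun i _ => ?_
    simp only [Polynomial.map_add, Polynomial.map_one, Polynomial.map_mul, map_C, map_X, eval_add,
      eval_one, eval_mul, eval_C, eval_X, Complex.ofRealHom_eq_coe, Complex.ofReal_div,
      Complex.ofReal_inv, Complex.ofReal_natCast]
    ring

theorem deformedExp_ne_zero_of_mem_slitPlane {q : ℝ} (hq0 : 0 < q) (hq1 : q < 1) {z : ℂ}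
    (hz : z ∈ Complex.slitPlane) : deformedExp (q : ℂ) z ≠ 0 := by
  obtain ⟨c, hc⟩ := exists_exp_neg_mul_sum_le_norm_prod hz
  have hq : ‖(q : ℂ)‖ ≤ 1 := by simpa [abs_of_pos hq0] using hq1.le
  have hbound : ∀ᶠ n : ℕ in atTop, Real.exp (-c) ≤ ‖(jensenPoly (q : ℂ) n).eval (z / n)‖ := by
    filter_upwards [eventually_ne_atTop 0] with n hn
    obtain ⟨t, ht, hsum, hprod⟩ := exists_eval_jensenPoly_div_eq_prod hq0 hq1 hn
    simpa [hprod, hsum] using hc (Finset.range n) t fun i _ => ht i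
  have hlim : Real.exp (-c) ≤ ‖deformedExp (q : ℂ) z‖ :=
    ge_of_tendsto (tendsto_eval_jensenPoly hq z).norm hbound
  exact norm_pos_iff.1 ((Real.exp_pos _).trans_le hlim)

lemma exists_neg_eq_ofReal_of_deformedExp_eq_zero {q : ℝ} (hq0 : 0 < q) (hq1 : q < 1) {z : ℂ}
    (hz : deformedExp (q : ℂ) z = 0) : ∃ x : ℝ, x < 0 ∧ z = x := by
  have hslit : z ∉ Complex.slitPlane := fun h =>
    deformedExp_ne_zero_of_mem_slitPlane hq0 hq1 h hz
  simp only [Complex.mem_slitPlane_iff, not_or, not_lt, not_not] at hslit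
  have hreal : z = z.re := Complex.ext rfl hslit.2
  refine ⟨z.re, hslit.1.lt_of_ne fun hre => ?_, hreal⟩
  rw [hreal, hre, Complex.ofReal_zero, deformedExp_zero_right] at hz
  exact one_ne_zero hz

end Nonvanishing

section Pantograph

variable {q : ℝ} {F : ℝ → ℝ}

lemma exists_zero_mem_Ioo_mul (hq0 : 0 < q) (hF : ∀ x, HasDerivAt F (F (q * x)) x) {u v : ℝ}
    (huv : u < v) (hu : F u = 0) (hv : F v = 0) : ∃ w ∈ Set.Ioo (q * u) (q * v), F w = 0 := by
  obtain ⟨c, hc, hc0⟩ := exists_hasDerivAt_eq_zero huv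
    (fun t _ => (hF t).continuousAt.continuousWithinAt) (hu.trans hv.symm) fun t _ => hF t
  exact ⟨q * c, ⟨mul_lt_mul_of_pos_left hc.1 hq0, mul_lt_mul_of_pos_left hc.2 hq0⟩, hc0⟩

theorem apply_mul_ne_zero_of_hasDerivAt_mul (hq0 : 0 < q) (hq1 : q < 1)
    (hF : ∀ x, HasDerivAt F (F (q * x)) x) (hF0 : F 0 ≠ 0) {x : ℝ} (hx : x < 0) (hFx : F x = 0) :
    F (q * x) ≠ 0 := by
  intro hFqx
  have hpair : ∀ n : ℕ, ∃ u v, F u = 0 ∧ F v = 0 ∧ q ^ n * x ≤ u ∧ u < v ∧ v ≤ q * u := fun n => by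
    induction n with
    | zero => exact ⟨x, q * x, hFx, hFqx, by simp, by nlinarith, le_rfl⟩
    | succ n ih =>
      obtain ⟨u, v, hu, hv, hxu, huv, hvu⟩ := ih
      obtain ⟨w, ⟨huw, hwv⟩, hw⟩ := exists_zero_mem_Ioo_mul hq0 hF huv hu hv
      obtain ⟨w', ⟨hvw', hww'⟩, hw'⟩ := exists_zero_mem_Ioo_mul hq0 hF (hvu.trans_lt huw) hv hw
      refine ⟨w, w', hw, hw', ?_, hwv.trans hvw', hww'.le⟩
      calc q ^ (n + 1) * x = q * (q ^ n * x) := by ring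
        _ ≤ q * u := by gcongr
        _ ≤ w := huw.le
  choose u v hu _ hxu huv hvu using hpair
  have hneg : ∀ n, u n ≤ 0 := fun n => by nlinarith [huv n, hvu n]
  have hlim : Tendsto u atTop (𝓝 0) := by
    refine tendsto_of_tendsto_of_tendsto_of_le_of_le ?_ tendsto_const_nhds hxu hneg
    simpa using (tendsto_pow_atTop_nhds_zero_of_lt_one hq0.le hq1).mul_const x
  refine hF0 (tendsto_nhds_unique ((hF 0).continuousAt.tendsto.comp hlim) ?_)
  simp [Function.comp_def, hu]

end Pantograph

theorem deriv_deformedExp_ne_zero {q : ℝ} (hq0 : 0 < q) (hq1 : q < 1) {x : ℝ} (hx : x < 0)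
    (hzero : deformedExp (q : ℂ) x = 0) : deriv (deformedExp (q : ℂ)) x ≠ 0 := by
  have hq : ‖q‖ ≤ 1 := by simpa [abs_of_pos hq0] using hq1.le
  have hqℂ : ‖(q : ℂ)‖ ≤ 1 := by rwa [Complex.norm_real]
  rw [(hasDerivAt_deformedExp hqℂ (x : ℂ)).deriv, ← Complex.ofReal_mul, deformedExp_ofReal,
    Complex.ofReal_ne_zero]
  rw [deformedExp_ofReal, Complex.ofReal_eq_zero] at hzero
  exact apply_mul_ne_zero_of_hasDerivAt_mul hq0 hq1 (hasDerivAt_deformedExp hq)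
    (by simp) hx hzero

/-- For `0 < q < 1`, every zero of the entire function
`f(z) = Σ_{n=0}^∞ z^n q^{n(n-1)/2}/n!` is real, negative, and simple
(the derivative of `f` does not vanish there). -/
theorem zeros_real_negative_simple (q : ℝ) (hq0 : 0 < q) (hq1 : q < 1)
    (f : ℂ → ℂ)
    (hf : ∀ z : ℂ, f z = ∑' n : ℕ, z ^ n * (q : ℂ) ^ (n * (n - 1) / 2) / (n.factorial : ℂ)) :
    ∀ z : ℂ, f z = 0 → (∃ x : ℝ, x < 0 ∧ z = (x : ℂ)) ∧ deriv f z ≠ 0 := by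
  obtain rfl : f = deformedExp (q : ℂ) := funext hf
  intro z hz
  obtain ⟨x, hx, rfl⟩ := exists_neg_eq_ofReal_of_deformedExp_eq_zero hq0 hq1 hz
  exact ⟨⟨x, hx, rfl⟩, deriv_deformedExp_ne_zero hq0 hq1 hx hz⟩
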